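/- arXiv:1412.2235 — 4 statements merged into one kernel-verified Lean document; each statement's English description precedes it below -/
import Mathlib

section
/- In a complete Heyting algebra A, for all a, b: the infimum over all x in A of ((a ⇨ (b ⇨ x)) ⇨ x) equals a ⊓ b. (This says the impredicative second-order encoding ∀P. (A → B → P) → P of conjunction is interpreted as the meet.) -/
theorem stmt_8 {A : Type*} [Order.Frame A] (a b : A) :
    ⨅ x : A, ((a ⇨ (b ⇨ x)) ⇨ x) = a ⊓ b := by
  apply le_antisymm
  · -- Instantiating at `x = a ⊓ b` makes the premise `a ⇨ b ⇨ x` equal to `⊤`.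
    refine (iInf_le _ (a ⊓ b)).trans ?_
    rw [himp_himp, himp_self, top_himp]
  · refine le_iInf fun x => ?_
    rw [le_himp_iff, himp_himp]
    exact inf_himp_le
end

section
/- In a complete Heyting algebra A, for all a, b: the infimum over all x in A of ((a ⇨ x) ⇨ ((b ⇨ x) ⇨ x)) equals a ⊔ b. (This says the impredicative second-order encoding ∀P. (A → P) → (B → P) → P of disjunction is interpreted as the join.) -/
theorem stmt_9 {A : Type*} [Order.Frame A] (a b : A) :
    ⨅ x : A, ((a ⇨ x) ⇨ ((b ⇨ x) ⇨ x)) = a ⊔ b := by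
  apply le_antisymm
  · -- At `x = a ⊔ b` both premises are `⊤`, so this term of the infimum is `a ⊔ b` itself.
    refine (iInf_le _ (a ⊔ b)).trans ?_
    rw [himp_eq_top_iff.2 le_sup_left, himp_eq_top_iff.2 le_sup_right, top_himp, top_himp]
  · refine le_iInf fun x => ?_
    rw [le_himp_iff, le_himp_iff, inf_sup_right, inf_sup_right]
    apply sup_le
    · exact inf_le_left.trans inf_himp_le
    · exact (inf_le_inf_right _ inf_le_left).trans inf_himp_le
end

section
/- Let A be a complete Heyting algebra, ι an index type, and q : ι → A a family of elements. Then the infimum over all x in A of ((⨅ i, (q i ⇨ x)) ⇨ x) equals the supremum ⨆ i, q i. (This says the impredicative second-order encoding ∀P. (∀a. Q a → P) → P of the existential quantifier is interpreted as the indexed join.) -/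
theorem stmt_10 {A : Type*} [Order.Frame A] {ι : Type*} (q : ι → A) :
    ⨅ x : A, ((⨅ i, (q i ⇨ x)) ⇨ x) = ⨆ i, q i := by
  apply le_antisymm
  · -- Instantiate at `x = ⨆ i, q i`, where every premise `q i ⇨ x` is `⊤`.
    refine (iInf_le _ (⨆ i, q i)).trans ?_
    have h : ⨅ i, (q i ⇨ ⨆ j, q j) = ⊤ :=
      iInf_eq_top.2 fun i => himp_eq_top_iff.2 (le_iSup q i)
    rw [h, top_himp]
  · refine iSup_le fun i => le_iInf fun x => ?_
    rw [le_himp_iff]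
    exact (inf_le_inf_left _ (iInf_le _ i)).trans inf_himp_le
end

section
/- In the frame of open sets of the Sierpiński space, the implication from the linearity axiom to the excluded middle is not valid: (⨅ U, ⨅ V, ((U ⇨ V) ⊔ (V ⇨ U))) ⇨ (⨅ U, (U ⊔ (U ⇨ ⊥))) is not equal to ⊤. (Hence the excluded middle cannot be deduced from the linearity axiom in ECC.) -/
/-!
In the Sierpiński space the only open set containing the closed point `False` is the whole space,
so the opens form the chain `∅ < {True} < ⊤`. Hence linearity has value `⊤`, while the excluded
middle fails at `U = {True}`: neither `U` nor its pseudo-complement `∅` contains `False`.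
-/

open TopologicalSpace

lemma opens_Prop_eq_top {U : Opens Prop} (h : False ∈ U) : U = ⊤ := by
  have h' : (U : Set Prop) ∈ nhds False := U.isOpen.mem_nhds h
  rw [nhds_false, Filter.mem_top] at h'
  exact Opens.ext h'

lemma opens_Prop_total (U V : Opens Prop) : U ≤ V ∨ V ≤ U := by
  by_cases hU : False ∈ U
  · exact Or.inr (opens_Prop_eq_top hU ▸ le_top)
  by_cases hV : False ∈ V
  · exact Or.inl (opens_Prop_eq_top hV ▸ le_top)
  by_cases hT : True ∈ V
  · left
    intro p hp
    by_cases h : p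
    · rwa [eq_true h]
    · exact absurd (eq_false h ▸ hp) hU
  · right
    intro p hp
    by_cases h : p
    · exact absurd (eq_true h ▸ hp) hT
    · exact absurd (eq_false h ▸ hp) hV

theorem stmt_15 :
    ((⨅ U : Opens Prop, ⨅ V : Opens Prop, ((U ⇨ V) ⊔ (V ⇨ U))) ⇨
        (⨅ U : Opens Prop, (U ⊔ (U ⇨ ⊥)))) ≠ ⊤ := by
  have hlin : (⨅ U : Opens Prop, ⨅ V : Opens Prop, ((U ⇨ V) ⊔ (V ⇨ U))) = ⊤ := by
    simp only [iInf_eq_top]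
    intro U V
    rcases opens_Prop_total U V with h | h
    · rw [himp_eq_top_iff.2 h, top_sup_eq]
    · rw [himp_eq_top_iff.2 h, sup_top_eq]
  rw [hlin, top_himp]
  intro hem
  let T : Opens Prop := ⟨{True}, isOpen_singleton_true⟩
  have hT : T ⊔ (T ⇨ ⊥) = ⊤ := iInf_eq_top.1 hem T
  have hF : False ∈ T ⊔ (T ⇨ ⊥) := hT ▸ Opens.mem_top False
  rcases Opens.mem_sup.1 hF with h | h
  · have h' : False = True := h
    exact h'.symm ▸ trivial
  · -- The pseudo-complement of `T` would be everything, forcing `T ≤ ⊥`.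
    have hle : T ≤ ⊥ := himp_eq_top_iff.1 (opens_Prop_eq_top h)
    exact hle (show True ∈ T from rfl)
end
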